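/- Let η ∈ S₄ be the longest permutation, η(i) = 5 − i for all i (complete notation [4321]). The set BL_η ⊂ Lo¹₄ has exactly 20 connected components, and every connected component of BL_η is contractible. -/

import Mathlib

open Matrix

/-- The group `Lo¹_m` of real lower triangular `m × m` matrices with
all diagonal entries equal to `1`, viewed as a subset of the matrix space. -/
def Lo1 (m : ℕ) : Set (Matrix (Fin m) (Fin m) ℝ) :=
  {L | (∀ i, L i i = 1) ∧ ∀ i j : Fin m, i < j → L i j = 0}

/-- The set of invertible real upper triangular `m × m` matrices. -/
def UpInv (m : ℕ) : Set (Matrix (Fin m) (Fin m) ℝ) :=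
  {U | (∀ i j : Fin m, j < i → U i j = 0) ∧ IsUnit U.det}

/-- The permutation matrix of `σ`, with `(P_σ)_{i, σ(i)} = 1` and `0` otherwise. -/
def permMat (m : ℕ) (σ : Equiv.Perm (Fin m)) : Matrix (Fin m) (Fin m) ℝ :=
  fun i j => if σ i = j then 1 else 0

/-- The Bruhat cell `Bru_σ^GL = { U₀ P_σ U₁ : U₀, U₁ upper triangular invertible }`. -/
def Bru (m : ℕ) (σ : Equiv.Perm (Fin m)) : Set (Matrix (Fin m) (Fin m) ℝ) :=
  {M | ∃ U₀ ∈ UpInv m, ∃ U₁ ∈ UpInv m, M = U₀ * permMat m σ * U₁}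

/-- `BL_σ = Lo¹ ∩ Bru_σ^GL`. -/
def BL (m : ℕ) (σ : Equiv.Perm (Fin m)) : Set (Matrix (Fin m) (Fin m) ℝ) :=
  Lo1 m ∩ Bru m σ

/-- The longest permutation `η = [4321] ∈ S₄`, `η(i) = 5 − i`
(here `0`-indexed on `Fin 4`). -/
def η4 : Equiv.Perm (Fin 4) :=
  ⟨![3, 2, 1, 0], ![3, 2, 1, 0], by decide, by decide⟩

open Set Topology ContinuousMap in
/-- A space with convex nonempty fibres over a contractible base is contractible. -/
theorem fib_contractible {E : Type} [MetricSpace E] (B : Set E) (hB : ContractibleSpace B)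
    (S : Set (E × ℝ)) (hS : IsOpen S) (hSB : ∀ x ∈ S, x.1 ∈ B)
    (hne : ∀ b ∈ B, ∃ t, (b, t) ∈ S)
    (hconv : ∀ b ∈ B, Convex ℝ {t : ℝ | (b, t) ∈ S}) : ContractibleSpace S := by
  obtain ⟨g, hg⟩ := exists_continuous_forall_mem_convex_of_local_const (X := B)
    (t := fun b => {t : ℝ | ((b : E), t) ∈ S}) (fun b => hconv b b.2) (by
      intro b
      obtain ⟨t, ht⟩ := hne b b.2
      refine ⟨t, ?_⟩
      have hc : Continuous (fun y : B => ((y : E), t)) := by fun_prop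
      exact (hS.preimage hc).mem_nhds ht)
  let p : C(S, B) := ⟨fun x => ⟨x.1.1, hSB _ x.2⟩, by fun_prop⟩
  let s : C(B, S) := ⟨fun b => ⟨(b, g b), hg b⟩, by fun_prop⟩
  have hmem : ∀ (t : unitInterval) (x : S),
      (x.1.1, (1 - (t : ℝ)) * g (p x) + t * x.1.2) ∈ S := by
    intro t x
    have h1 := hconv x.1.1 (hSB _ x.2)
    have h2 := h1 (hg (p x)) (show x.1.2 ∈ {t : ℝ | (x.1.1, t) ∈ S} from x.2)
      (sub_nonneg.2 t.2.2) t.2.1 (by ring)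
    simpa [smul_eq_mul] using h2
  have e : HomotopyEquiv S B :=
    { toFun := p
      invFun := s
      left_inv := ⟨{ toFun := fun q => ⟨_, hmem q.1 q.2⟩
                     continuous_toFun := by fun_prop
                     map_zero_left := by
                      intro x; apply Subtype.ext; simp [p, s]
                     map_one_left := by
                      intro x; apply Subtype.ext; simp }⟩
      right_inv := by
        have : p.comp s = ContinuousMap.id B := by
          ext b; rfl
        rw [this] }
  exact e.contractibleSpace

open Set Topology in
/-- Connected components of a space decomposed into open contractible pieces. -/
theorem components_of_pieces {X E ι : Type} [TopologicalSpace X] [TopologicalSpace E]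
    (k : X → E) (hk : IsEmbedding k) (U : ι → Set E) (hU : ∀ i, IsOpen (U i))
    (hc : ∀ i, ContractibleSpace (U i)) (hr : range k = ⋃ i, U i)
    (hd : ∀ i j x, x ∈ U i → x ∈ U j → i = j) :
    Nat.card (ConnectedComponents X) = Nat.card ι ∧
      ∀ x : X, ContractibleSpace (connectedComponent x) := by
  have hsub : ∀ i, U i ⊆ range k := fun i => by rw [hr]; exact subset_iUnion U i
  have hopen : ∀ i, IsOpen (k ⁻¹' U i) := fun i => (hU i).preimage hk.continuous
  have hclopen : ∀ i, IsClopen (k ⁻¹' U i) := by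
    intro i
    refine ⟨⟨?_⟩, hopen i⟩
    have : (k ⁻¹' U i)ᶜ = ⋃ j ∈ {j | j ≠ i}, k ⁻¹' U j := by
      ext x
      simp only [mem_compl_iff, mem_preimage, mem_iUnion, mem_ofPred_eq, exists_prop]
      constructor
      · intro h
        have : k x ∈ ⋃ i, U i := hr ▸ mem_range_self x
        obtain ⟨j, hj⟩ := mem_iUnion.1 this
        exact ⟨j, fun e => h (e ▸ hj), hj⟩
      · rintro ⟨j, hji, hj⟩ h
        exact hji (hd _ _ _ hj h)
    rw [this]
    exact isOpen_biUnion fun j _ => hopen j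
  have hcc : ∀ i x, k x ∈ U i → connectedComponent x = k ⁻¹' U i := by
    intro i x hx
    apply Subset.antisymm
    · exact (hclopen i).connectedComponent_subset hx
    · refine IsPreconnected.subset_connectedComponent (s := k ⁻¹' U i) ?_ hx
      rw [← hk.isInducing.isPreconnected_image, image_preimage_eq_of_subset (hsub i)]
      have := hc i
      exact isPreconnected_iff_preconnectedSpace.2 inferInstance
  constructor
  · have hex : ∀ i, ∃ x, k x ∈ U i := by
      intro i
      have := hc i
      obtain ⟨y⟩ : Nonempty (U i) := inferInstance
      obtain ⟨x, hx⟩ := hsub i y.2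
      exact ⟨x, hx ▸ y.2⟩
    choose x hx using hex
    symm
    apply Nat.card_eq_of_bijective (fun i => (ConnectedComponents.mk (x i)))
    constructor
    · intro i j hij
      have h := ConnectedComponents.coe_eq_coe.1 hij
      rw [hcc i _ (hx i), hcc j _ (hx j)] at h
      have : x i ∈ k ⁻¹' U j := h ▸ hx i
      exact hd _ _ _ (hx i) this
    · intro q
      obtain ⟨y, rfl⟩ := ConnectedComponents.surjective_coe q
      have : k y ∈ ⋃ i, U i := hr ▸ mem_range_self y
      obtain ⟨i, hi⟩ := mem_iUnion.1 this
      refine ⟨i, ConnectedComponents.coe_eq_coe.2 ?_⟩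
      rw [hcc i _ (hx i), hcc i _ hi]
  · intro y
    have : k y ∈ ⋃ i, U i := hr ▸ mem_range_self y
    obtain ⟨i, hi⟩ := mem_iUnion.1 this
    rw [hcc i _ hi]
    have h1 : IsEmbedding ((U i).restrictPreimage k) := hk.restrictPreimage _
    have h2 : Function.Surjective ((U i).restrictPreimage k) := by
      rintro ⟨z, hz⟩
      obtain ⟨w, rfl⟩ := hsub i hz
      exact ⟨⟨w, hz⟩, rfl⟩
    have := hc i
    exact (h1.toHomeomorphOfSurjective h2).contractibleSpace

theorem mul_perm_apply (U V : Matrix (Fin 4) (Fin 4) ℝ) (i j : Fin 4) :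
    (U * permMat 4 η4 * V) i j
      = U i 0 * V 3 j + U i 1 * V 2 j + U i 2 * V 1 j + U i 3 * V 0 j := by
  simp [Matrix.mul_apply, permMat, η4, Fin.sum_univ_four]
  ring

/-- Membership in `BL 4 η4` through minors. -/
theorem mem_BL_iff (L : Matrix (Fin 4) (Fin 4) ℝ) : L ∈ BL 4 η4 ↔
    L ∈ Lo1 4 ∧ L 3 0 ≠ 0 ∧ L 2 0 * L 3 1 - L 2 1 * L 3 0 ≠ 0 ∧
      L 1 0 * L 2 1 * L 3 2 - L 1 0 * L 3 1 - L 3 2 * L 2 0 + L 3 0 ≠ 0 := by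
  constructor
  · rintro ⟨hL, U, ⟨hU, hUd⟩, V, ⟨hV, hVd⟩, hM⟩
    refine ⟨hL, ?_⟩
    rw [Matrix.det_of_isUpperTriangular (fun i j h => hU i j h), isUnit_iff_ne_zero,
      Finset.prod_ne_zero_iff] at hUd
    rw [Matrix.det_of_isUpperTriangular (fun i j h => hV i j h), isUnit_iff_ne_zero,
      Finset.prod_ne_zero_iff] at hVd
    have hP : ∀ i j, L i j = U i 0 * V 3 j + U i 1 * V 2 j + U i 2 * V 1 j + U i 3 * V 0 j := by
      intro i j
      rw [hM, mul_perm_apply]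
    have u0 := hUd 0 (by simp)
    have u1 := hUd 1 (by simp)
    have u2 := hUd 2 (by simp)
    have u3 := hUd 3 (by simp)
    have v0 := hVd 0 (by simp)
    have v1 := hVd 1 (by simp)
    have v2 := hVd 2 (by simp)
    have v3 := hVd 3 (by simp)
    have hU10 := hU 1 0 (by decide)
    have hU20 := hU 2 0 (by decide)
    have hU30 := hU 3 0 (by decide)
    have hU21 := hU 2 1 (by decide)
    have hU31 := hU 3 1 (by decide)
    have hU32 := hU 3 2 (by decide)
    have hV10 := hV 1 0 (by decide)
    have hV20 := hV 2 0 (by decide)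
    have hV30 := hV 3 0 (by decide)
    have hV21 := hV 2 1 (by decide)
    have hV31 := hV 3 1 (by decide)
    have hV32 := hV 3 2 (by decide)
    have h11 := hL.1 1
    have h22 := hL.1 2
    have h12 := hL.2 1 2 (by decide)
    have e1 : L 3 0 = U 3 3 * V 0 0 := by rw [hP]; simp [*]
    have e2 : L 2 0 * L 3 1 - L 2 1 * L 3 0 = - (U 2 2 * U 3 3 * V 0 0 * V 1 1) := by
      rw [hP, hP, hP, hP]; simp only [*]; ring
    have e3 : L 1 0 * L 2 1 * L 3 2 - L 1 0 * L 3 1 - L 3 2 * L 2 0 + L 3 0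
        = - (U 1 1 * U 2 2 * U 3 3 * V 0 0 * V 1 1 * V 2 2) := by
      have : L 1 0 * L 2 1 * L 3 2 - L 1 0 * L 3 1 - L 3 2 * L 2 0 + L 3 0
         = L 1 0 * (L 2 1 * L 3 2 - L 2 2 * L 3 1) - L 1 1 * (L 2 0 * L 3 2 - L 2 2 * L 3 0)
          + L 1 2 * (L 2 0 * L 3 1 - L 2 1 * L 3 0) := by
        rw [h11, h22, h12]; ring
      rw [this]
      simp only [hP, hU10, hU20, hU30, hU21, hU31, hU32, hV10, hV20, hV30, hV21, hV31, hV32]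
      ring
    rw [e2, e3, e1]
    simp [u1, u2, u3, v0, v1, v2]
  · rintro ⟨hL, h1, h2, h3⟩
    refine ⟨hL, ?_⟩
    obtain ⟨a, ha⟩ : ∃ a, L 1 0 = a := ⟨_, rfl⟩
    obtain ⟨b, hb⟩ : ∃ a, L 2 1 = a := ⟨_, rfl⟩
    obtain ⟨c, hc⟩ : ∃ a, L 3 2 = a := ⟨_, rfl⟩
    obtain ⟨d, hd⟩ : ∃ a, L 2 0 = a := ⟨_, rfl⟩
    obtain ⟨e, he⟩ : ∃ a, L 3 1 = a := ⟨_, rfl⟩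
    obtain ⟨f, hf⟩ : ∃ a, L 3 0 = a := ⟨_, rfl⟩
    have h00 := hL.1 0
    have h11 := hL.1 1
    have h22 := hL.1 2
    have h33 := hL.1 3
    have h01 := hL.2 0 1 (by decide)
    have h02 := hL.2 0 2 (by decide)
    have h03 := hL.2 0 3 (by decide)
    have h12 := hL.2 1 2 (by decide)
    have h13 := hL.2 1 3 (by decide)
    have h23 := hL.2 2 3 (by decide)
    rw [ha, hb, hc, hd, he, hf] at h3
    rw [hb, hd, he, hf] at h2
    rw [hf] at h1
    obtain ⟨q, hq⟩ : ∃ q, q = a * b * c - a * e - c * d + f := ⟨_, rfl⟩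
    obtain ⟨p, hp⟩ : ∃ p, p = d * e - b * f := ⟨_, rfl⟩
    rw [← hq] at h3
    rw [← hp] at h2
    refine ⟨!![1, (b*c-e)/q, e/p, 1/f; 0, 1, (a*e-f)/p, a/f; 0, 0, 1, d/f; 0, 0, 0, 1], ?_,
      !![f, e, c, 1; 0, -p/f, (f-d*c)/f, -d/f; 0, 0, q/p, (a*b-d)/p; 0, 0, 0, -1/q], ?_, ?_⟩
    · have ht : ∀ i j : Fin 4, j < i →
        (!![1, (b*c-e)/q, e/p, 1/f; 0, 1, (a*e-f)/p, a/f; 0, 0, 1, d/f; 0, 0, 0, 1] :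
          Matrix (Fin 4) (Fin 4) ℝ) i j = 0 := by
        intro i j hij
        fin_cases i <;> fin_cases j <;> first | rfl | (exact absurd hij (by decide))
      refine ⟨ht, ?_⟩
      rw [Matrix.det_of_isUpperTriangular (fun i j h => ht i j h)]
      simp [Fin.prod_univ_four]
    · have ht : ∀ i j : Fin 4, j < i →
        (!![f, e, c, 1; 0, -p/f, (f-d*c)/f, -d/f; 0, 0, q/p, (a*b-d)/p; 0, 0, 0, -1/q] :
          Matrix (Fin 4) (Fin 4) ℝ) i j = 0 := by
        intro i j hij
        fin_cases i <;> fin_cases j <;> first | rfl | (exact absurd hij (by decide))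
      refine ⟨ht, ?_⟩
      rw [Matrix.det_of_isUpperTriangular (fun i j h => ht i j h)]
      simp [Fin.prod_univ_four, h1, h2, h3]
    · ext i j
      rw [mul_perm_apply]
      fin_cases i <;> fin_cases j <;>
        simp [ha, hb, hc, hd, he, hf, h00, h11, h22, h33, h01, h02, h03, h12, h13, h23] <;>
        (try field_simp) <;> (try simp only [hp, hq]) <;> (try ring)

/-- Coordinates `(((((f, p), c), d), e), a)`. -/
abbrev E6 : Type := ((((ℝ × ℝ) × ℝ) × ℝ) × ℝ) × ℝ

/-- The image of `BL 4 η4` in the coordinates. -/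
def Z6 : Set E6 := {x | x.1.1.1.1.1 ≠ 0 ∧ x.1.1.1.1.2 ≠ 0 ∧
  x.2 * (x.1.2 * (x.1.1.1.2 * x.1.1.2 - 1) - x.1.1.1.2) - (x.1.1.1.2 * x.1.1.2 - 1) ≠ 0}

/-- The second coordinate. -/
noncomputable def pc (L : Matrix (Fin 4) (Fin 4) ℝ) : ℝ :=
  (L 2 0 * L 3 1 - L 2 1 * L 3 0) / L 3 0 ^ 2

/-- The coordinate map. -/
noncomputable def toE (L : Matrix (Fin 4) (Fin 4) ℝ) : E6 :=
  (((((L 3 0, pc L), L 3 2 * pc L), L 2 0 / (L 3 0 * pc L)), L 3 1 / L 3 0), L 1 0)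

/-- The inverse of the coordinate map. -/
noncomputable def ofE (x : E6) : Matrix (Fin 4) (Fin 4) ℝ :=
  !![1, 0, 0, 0;
     x.2, 1, 0, 0;
     x.1.1.1.1.1 * x.1.1.1.1.2 * x.1.1.2,
       x.1.1.1.1.1 * x.1.1.1.1.2 * (x.1.1.2 * x.1.2 - 1), 1, 0;
     x.1.1.1.1.1, x.1.1.1.1.1 * x.1.2, x.1.1.1.2 / x.1.1.1.1.2, 1]

theorem ofE_mem (x : E6) (hx : x ∈ Z6) : ofE x ∈ BL 4 η4 := by
  obtain ⟨⟨⟨⟨⟨f, p⟩, c⟩, d⟩, e⟩, a⟩ := x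
  obtain ⟨hf, hp, hq⟩ := hx
  simp only at hf hp hq
  rw [mem_BL_iff]
  refine ⟨⟨?_, ?_⟩, ?_, ?_, ?_⟩
  · intro i; fin_cases i <;> rfl
  · intro i j hij
    fin_cases i <;> fin_cases j <;> first | rfl | (exact absurd hij (by decide))
  · simpa [ofE] using hf
  · have : f * p * d * (f * e) - f * p * (d * e - 1) * f = f ^ 2 * p := by ring
    simp [ofE, this, hf, hp]
  · have : a * (f * p * (d * e - 1)) * (c / p) - a * (f * e) - c / p * (f * p * d) + f
      = f * (a * (e * (c * d - 1) - c) - (c * d - 1)) := by field_simp; ring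
    simp only [ofE]
    simp
    rw [this]
    exact mul_ne_zero hf hq

theorem pc_ne (L : Matrix (Fin 4) (Fin 4) ℝ) (hL : L ∈ BL 4 η4) : pc L ≠ 0 := by
  rw [mem_BL_iff] at hL
  obtain ⟨-, h1, h2, -⟩ := hL
  exact div_ne_zero h2 (pow_ne_zero 2 h1)

theorem ofE_toE (L : Matrix (Fin 4) (Fin 4) ℝ) (hL : L ∈ BL 4 η4) : ofE (toE L) = L := by
  have hp := pc_ne L hL
  rw [mem_BL_iff] at hL
  obtain ⟨hL, h1, h2, -⟩ := hL
  have h00 := hL.1 0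
  have h11 := hL.1 1
  have h22 := hL.1 2
  have h33 := hL.1 3
  have h01 := hL.2 0 1 (by decide)
  have h02 := hL.2 0 2 (by decide)
  have h03 := hL.2 0 3 (by decide)
  have h12 := hL.2 1 2 (by decide)
  have h13 := hL.2 1 3 (by decide)
  have h23 := hL.2 2 3 (by decide)
  have key : L 3 0 * pc L * (L 2 0 / (L 3 0 * pc L) * (L 3 1 / L 3 0) - 1) = L 2 1 := by
    have h : pc L * L 3 0 ^ 2 = L 2 0 * L 3 1 - L 2 1 * L 3 0 := by
      unfold pc; field_simp
    field_simp
    linear_combination - h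
  ext i j
  fin_cases i <;> fin_cases j <;>
    simp [ofE, toE, h00, h11, h22, h33, h01, h02, h03, h12, h13, h23, key] <;> field_simp

theorem toE_ofE (x : E6) (hx : x ∈ Z6) : toE (ofE x) = x := by
  obtain ⟨⟨⟨⟨⟨f, p⟩, c⟩, d⟩, e⟩, a⟩ := x
  obtain ⟨hf, hp, hq⟩ := hx
  simp only at hf hp hq
  have : pc (ofE (((((f, p), c), d), e), a)) = p := by
    simp [pc, ofE]
    field_simp
    ring
  simp only [toE, this]
  simp [ofE]
  refine ⟨⟨?_, ?_⟩, ?_⟩ <;> field_simp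

theorem toE_mem (L : Matrix (Fin 4) (Fin 4) ℝ) (hL : L ∈ BL 4 η4) : toE L ∈ Z6 := by
  have hp := pc_ne L hL
  have hLL := ofE_toE L hL
  have h2 := (mem_BL_iff _).1 hL
  refine ⟨h2.2.1, hp, ?_⟩
  have h3 := h2.2.2.2
  have hf := h2.2.1
  rw [← hLL] at h3
  intro h0
  apply h3
  generalize hx : toE L = x at *
  have hf : x.1.1.1.1.1 ≠ 0 := by rw [← hx]; exact hf
  have hp : x.1.1.1.1.2 ≠ 0 := by rw [← hx]; exact hp
  obtain ⟨⟨⟨⟨⟨f, p⟩, c⟩, d⟩, e⟩, a⟩ := x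
  simp only at hf hp h0
  have : a * (f * p * (d * e - 1)) * (c / p) - a * (f * e) - c / p * (f * p * d) + f
      = f * (a * (e * (c * d - 1) - c) - (c * d - 1)) := by field_simp; ring
  simp [ofE]
  rw [this, h0, mul_zero]

/-- `BL 4 η4` in coordinates. -/
noncomputable def homeoZ : BL 4 η4 ≃ₜ Z6 where
  toFun L := ⟨toE L, toE_mem L L.2⟩
  invFun x := ⟨ofE x, ofE_mem x x.2⟩
  left_inv L := Subtype.ext (ofE_toE L L.2)
  right_inv x := Subtype.ext (toE_ofE x x.2)
  continuous_toFun := by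
    have hc : ∀ i j, Continuous fun L : BL 4 η4 => (L : Matrix (Fin 4) (Fin 4) ℝ) i j :=
      fun i j => (continuous_apply_apply i j).comp continuous_subtype_val
    have h1 : ∀ L : BL 4 η4, (L : Matrix (Fin 4) (Fin 4) ℝ) 3 0 ≠ 0 :=
      fun L => ((mem_BL_iff _).1 L.2).2.1
    have hpc : Continuous fun L : BL 4 η4 => pc L := by
      unfold pc
      exact (((hc 2 0).mul (hc 3 1)).sub ((hc 2 1).mul (hc 3 0))).div ((hc 3 0).pow 2)
        (fun L => pow_ne_zero 2 (h1 L))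
    refine Continuous.subtype_mk ?_ _
    unfold toE
    exact (((((hc 3 0).prodMk hpc).prodMk ((hc 3 2).mul hpc)).prodMk
      ((hc 2 0).div ((hc 3 0).mul hpc) (fun L => mul_ne_zero (h1 L) (pc_ne L L.2)))).prodMk
      ((hc 3 1).div (hc 3 0) h1)).prodMk (hc 1 0)
  continuous_invFun := by
    refine Continuous.subtype_mk ?_ _
    refine continuous_matrix ?_
    intro i j
    have h : Continuous fun x : Z6 => (x : E6).1.1.1.2 / (x : E6).1.1.1.1.2 :=
      Continuous.div (by fun_prop) (by fun_prop) (fun x => x.2.2.1)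
    fin_cases i <;> fin_cases j <;> simp [ofE] <;> first | exact h | fun_prop

theorem isOpen_or_set {E : Type} [TopologicalSpace E] {p q : E → Prop} (h : IsOpen {x | p x})
    (hq : IsOpen {x | q x}) : IsOpen {x | p x ∨ q x} := h.union hq

/-- Quadrants in the first two coordinates. -/
def Q2 (s t : ℝ) : Set (ℝ × ℝ) := {x | 0 < s * x.1 ∧ 0 < t * x.2}

/-- first negative piece -/
def TA (s t r : ℝ) : Set E6 := {x | (((0 < s * x.1.1.1.1.1 ∧ 0 < t * x.1.1.1.1.2) ∧
  (x.1.1.1.2 * x.1.1.2 < 1 ∨ 0 < r * x.1.1.1.2)) ∧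
  ((r * (x.1.2 * (x.1.1.1.2 * x.1.1.2 - 1)) < r * x.1.1.1.2) ∨
     (0 < r * x.1.1.1.2 ∧ 1 < x.1.1.1.2 * x.1.1.2))) ∧
  x.2 * (x.1.2 * (x.1.1.1.2 * x.1.1.2 - 1) - x.1.1.1.2) < (x.1.1.1.2 * x.1.1.2 - 1)}

/-- small positive piece -/
def TB (s t r : ℝ) : Set E6 := {x | ((((0 < s * x.1.1.1.1.1 ∧ 0 < t * x.1.1.1.1.2) ∧
  0 < r * x.1.1.1.2) ∧ 1 < x.1.1.1.2 * x.1.1.2) ∧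
  r * x.1.1.1.2 < r * (x.1.2 * (x.1.1.1.2 * x.1.1.2 - 1))) ∧
  (x.1.1.1.2 * x.1.1.2 - 1) < x.2 * (x.1.2 * (x.1.1.1.2 * x.1.1.2 - 1) - x.1.1.1.2)}

/-- large positive piece -/
def TC (s t : ℝ) : Set E6 := {x | ((0 < s * x.1.1.1.1.1 ∧ 0 < t * x.1.1.1.1.2) ∧
  (x.1.1.1.2 * x.1.1.2 < 1 ∨ (0 < x.1.1.1.2 ∧ x.1.2 * (x.1.1.1.2 * x.1.1.2 - 1) < x.1.1.1.2) ∨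
    (x.1.1.1.2 < 0 ∧ x.1.1.1.2 < x.1.2 * (x.1.1.1.2 * x.1.1.2 - 1)))) ∧
  (x.1.1.1.2 * x.1.1.2 - 1) < x.2 * (x.1.2 * (x.1.1.1.2 * x.1.1.2 - 1) - x.1.1.1.2)}

theorem Q2_contractible {s t : ℝ} (hs : s = 1 ∨ s = -1) (ht : t = 1 ∨ t = -1) :
    ContractibleSpace (Q2 s t) := by
  have hc : Convex ℝ (Q2 s t) := by
    rintro ⟨x, y⟩ ⟨h1, h2⟩ ⟨z, w⟩ ⟨h3, h4⟩ a b ha hb hab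
    simp only at h1 h2 h3 h4
    obtain rfl : b = 1 - a := by linarith
    constructor
    · have := (convex_Ioi (0 : ℝ)) h1 h3 ha hb hab
      simp only [smul_eq_mul, Set.mem_Ioi] at this
      simp only [Prod.smul_mk, Prod.mk_add_mk, smul_eq_mul]
      linarith
    · have := (convex_Ioi (0 : ℝ)) h2 h4 ha hb hab
      simp only [smul_eq_mul, Set.mem_Ioi] at this
      simp only [Prod.smul_mk, Prod.mk_add_mk, smul_eq_mul]
      linarith
  refine hc.contractibleSpace ⟨(s, t), ?_⟩
  rcases hs with rfl | rfl <;> rcases ht with rfl | rfl <;> simp [Q2]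

theorem conv_lt (m k : ℝ) : Convex ℝ {t : ℝ | t * m < k} := by
  have := (convex_Iio k).is_linear_preimage (f := fun t : ℝ => t * m)
    (IsLinearMap.mk (fun x y => add_mul x y m) (fun c x => mul_assoc c x m))
  exact this

theorem conv_gt (m k : ℝ) : Convex ℝ {t : ℝ | k < t * m} := by
  have := (convex_Ioi k).is_linear_preimage (f := fun t : ℝ => t * m)
    (IsLinearMap.mk (fun x y => add_mul x y m) (fun c x => mul_assoc c x m))
  exact this

theorem ex_lt (m k : ℝ) (h : m ≠ 0 ∨ 0 < k) : ∃ t : ℝ, t * m < k := by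
  rcases h with h | h
  · exact ⟨(k - 1) / m, by rw [div_mul_cancel₀ _ h]; linarith⟩
  · exact ⟨0, by simpa using h⟩

theorem ex_gt (m k : ℝ) (h : m ≠ 0 ∨ k < 0) : ∃ t : ℝ, k < t * m := by
  rcases h with h | h
  · exact ⟨(k + 1) / m, by rw [div_mul_cancel₀ _ h]; linarith⟩
  · exact ⟨0, by simpa using h⟩

theorem conv_or {S : Set ℝ} {P : Prop} (h : Convex ℝ S) : Convex ℝ {t | t ∈ S ∨ P} := by
  by_cases hP : P
  · simpa [hP] using convex_univ
  · simpa [hP] using h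

theorem conv_and {S : Set ℝ} {P : Prop} (h : Convex ℝ S) : Convex ℝ {t | P ∧ t ∈ S} := by
  by_cases hP : P
  · simpa [hP] using h
  · simpa [hP] using convex_empty

theorem Q2_open (s t : ℝ) : IsOpen (Q2 s t) :=
  (isOpen_lt (by fun_prop) (by fun_prop)).and (isOpen_lt (by fun_prop) (by fun_prop))

/-- Adding a coordinate subject to an open convex nonempty condition. -/
theorem fib_step {E : Type} [MetricSpace E] (B : Set E) (hB : IsOpen B ∧ ContractibleSpace B)
    (P : E → ℝ → Prop) (hP : IsOpen {x : E × ℝ | P x.1 x.2})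
    (hne : ∀ b ∈ B, ∃ t, P b t) (hconv : ∀ b ∈ B, Convex ℝ {t : ℝ | P b t}) :
    IsOpen {x : E × ℝ | x.1 ∈ B ∧ P x.1 x.2} ∧
      ContractibleSpace {x : E × ℝ | x.1 ∈ B ∧ P x.1 x.2} := by
  have ho : IsOpen {x : E × ℝ | x.1 ∈ B ∧ P x.1 x.2} := (hB.1.preimage continuous_fst).and hP
  refine ⟨ho, fib_contractible B hB.2 _ ho (fun x hx => hx.1)
    (fun b hb => (hne b hb).imp fun t ht => ⟨hb, ht⟩) (fun b hb => ?_)⟩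
  have : {t : ℝ | (b, t) ∈ {x : E × ℝ | x.1 ∈ B ∧ P x.1 x.2}} = {t : ℝ | P b t} := by
    ext t; simp [hb]
  rw [this]; exact hconv b hb

/-- Adding an unconstrained coordinate. -/
theorem free_step {E : Type} [MetricSpace E] (B : Set E) (hB : IsOpen B ∧ ContractibleSpace B) :
    IsOpen {x : E × ℝ | x.1 ∈ B} ∧ ContractibleSpace {x : E × ℝ | x.1 ∈ B} := by
  have h := fib_step B hB (fun _ _ => True) (by simp) (fun b _ => ⟨0, trivial⟩)
    (fun b _ => by simpa using convex_univ)
  have e : {x : E × ℝ | x.1 ∈ B ∧ True} = {x : E × ℝ | x.1 ∈ B} := by ext x; simp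
  rw [e] at h
  exact h


theorem conv_lt' (g : ℝ → ℝ) (m k : ℝ) (h : ∀ t, g t = t * m) : Convex ℝ {t : ℝ | g t < k} := by
  simp only [h]; exact conv_lt m k

theorem conv_gt' (g : ℝ → ℝ) (m k : ℝ) (h : ∀ t, g t = t * m) : Convex ℝ {t : ℝ | k < g t} := by
  simp only [h]; exact conv_gt m k

theorem TC_good {s t : ℝ} (hs : s = 1 ∨ s = -1) (ht : t = 1 ∨ t = -1) :
    IsOpen (TC s t) ∧ ContractibleSpace (TC s t) := by
  have h1 := free_step _ (free_step _ ⟨Q2_open s t, Q2_contractible hs ht⟩)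
  have h2 := fib_step _ h1
    (fun x e => x.1.2 * x.2 < 1 ∨ (0 < x.1.2 ∧ e * (x.1.2 * x.2 - 1) < x.1.2) ∨
      (x.1.2 < 0 ∧ x.1.2 < e * (x.1.2 * x.2 - 1)))
    (by
      refine isOpen_or_set (isOpen_lt (by fun_prop) (by fun_prop)) (isOpen_or_set
        (IsOpen.and (isOpen_lt (by fun_prop) (by fun_prop)) (isOpen_lt (by fun_prop) (by fun_prop)))
        (IsOpen.and (isOpen_lt (by fun_prop) (by fun_prop))
          (isOpen_lt (by fun_prop) (by fun_prop)))))
    (by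
      rintro ⟨⟨q, c⟩, d⟩ -
      rcases lt_trichotomy c 0 with h | h | h
      · exact ⟨0, Or.inr (Or.inr ⟨h, by simpa using h⟩)⟩
      · exact ⟨0, Or.inl (by simp [h])⟩
      · exact ⟨0, Or.inr (Or.inl ⟨h, by simpa using h⟩)⟩)
    (by
      rintro ⟨⟨q, c⟩, d⟩ -
      simp only
      rcases lt_trichotomy c 0 with h | h | h
      · have : ¬ (0 < c) := by linarith
        simp only [h, this, false_and, true_and, false_or]
        simp only [or_comm (a := c * d < 1)]
        exact conv_or (conv_gt _ _)
      · simpa [h] using convex_univ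
      · have : ¬ (c < 0) := by linarith
        simp only [h, this, false_and, true_and, or_false]
        simp only [or_comm (a := c * d < 1)]
        exact conv_or (conv_lt _ _))
  exact fib_step _ h2
    (fun x a => x.1.1.2 * x.1.2 - 1 < a * (x.2 * (x.1.1.2 * x.1.2 - 1) - x.1.1.2))
    (isOpen_lt (by fun_prop) (by fun_prop))
    (by
      rintro ⟨⟨⟨q, c⟩, d⟩, e⟩ ⟨-, h⟩
      apply ex_gt
      simp only at h ⊢
      rcases h with h | h | h
      · right; linarith
      · left; intro h0; linarith
      · left; intro h0; linarith)
    (fun b _ => conv_gt _ _)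

theorem TA_good {s t r : ℝ} (hs : s = 1 ∨ s = -1) (ht : t = 1 ∨ t = -1) (hr : r = 1 ∨ r = -1) :
    IsOpen (TA s t r) ∧ ContractibleSpace (TA s t r) := by
  have h1 := free_step _ ⟨Q2_open s t, Q2_contractible hs ht⟩
  have h2 := fib_step _ h1 (fun x d => x.2 * d < 1 ∨ 0 < r * x.2)
    (isOpen_or_set (isOpen_lt (by fun_prop) (by fun_prop)) (isOpen_lt (by fun_prop) (by fun_prop)))
    (fun b _ => ⟨0, Or.inl (by simp)⟩)
    (fun b _ => conv_or (conv_lt' _ b.2 _ (fun t => mul_comm _ _)))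
  have h3 := fib_step _ h2
    (fun x e => (r * (e * (x.1.2 * x.2 - 1)) < r * x.1.2) ∨ (0 < r * x.1.2 ∧ 1 < x.1.2 * x.2))
    (isOpen_or_set (isOpen_lt (by fun_prop) (by fun_prop))
      (IsOpen.and (isOpen_lt (by fun_prop) (by fun_prop)) (isOpen_lt (by fun_prop) (by fun_prop))))
    (by
      rintro ⟨⟨q, c⟩, d⟩ ⟨-, h⟩
      simp only at h ⊢
      by_cases hc : 0 < r * c
      · exact ⟨0, Or.inl (by simpa using hc)⟩
      · have hcd : c * d < 1 := by tauto
        have hne : r * (c * d - 1) ≠ 0 := by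
          apply mul_ne_zero
          · rcases hr with rfl | rfl <;> norm_num
          · linarith
        obtain ⟨e, he⟩ := ex_lt (r * (c * d - 1)) (r * c) (Or.inl hne)
        exact ⟨e, Or.inl (by linarith)⟩)
    (fun b _ => conv_or (conv_lt' _ (r * (b.1.2 * b.2 - 1)) _ (fun t => by ring)))
  exact fib_step _ h3
    (fun x a => a * (x.2 * (x.1.1.2 * x.1.2 - 1) - x.1.1.2) < x.1.1.2 * x.1.2 - 1)
    (isOpen_lt (by fun_prop) (by fun_prop))
    (by
      rintro ⟨⟨⟨q, c⟩, d⟩, e⟩ ⟨-, h⟩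
      apply ex_lt
      simp only at h ⊢
      rcases h with h | h
      · left; intro h0
        have : e * (c * d - 1) = c := by linarith
        rw [this] at h
        exact lt_irrefl _ h
      · right; linarith)
    (fun b _ => conv_lt _ _)

theorem TB_good {s t r : ℝ} (hs : s = 1 ∨ s = -1) (ht : t = 1 ∨ t = -1) (hr : r = 1 ∨ r = -1) :
    IsOpen (TB s t r) ∧ ContractibleSpace (TB s t r) := by
  have hrr : r * r = 1 := by rcases hr with rfl | rfl <;> norm_num
  have hr0 : r ≠ 0 := by rcases hr with rfl | rfl <;> norm_num
  have h1 := fib_step _ ⟨Q2_open s t, Q2_contractible hs ht⟩ (fun _ c => 0 < r * c)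
    (isOpen_lt (by fun_prop) (by fun_prop)) (fun b _ => ⟨r, by rw [hrr]; norm_num⟩)
    (fun b _ => conv_gt' _ r _ (fun t => mul_comm _ _))
  have h2 := fib_step _ h1 (fun x d => 1 < x.2 * d)
    (isOpen_lt (by fun_prop) (by fun_prop))
    (by
      rintro ⟨q, c⟩ ⟨-, h⟩
      simp only at h ⊢
      obtain ⟨d, hd⟩ := ex_gt c 1 (Or.inl (by rintro rfl; simp at h))
      exact ⟨d, by linarith⟩)
    (fun b _ => conv_gt' _ b.2 _ (fun t => mul_comm _ _))
  have h3 := fib_step _ h2 (fun x e => r * x.1.2 < r * (e * (x.1.2 * x.2 - 1)))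
    (isOpen_lt (by fun_prop) (by fun_prop))
    (by
      rintro ⟨⟨q, c⟩, d⟩ ⟨-, h⟩
      simp only at h ⊢
      obtain ⟨e, he⟩ := ex_gt (r * (c * d - 1)) (r * c)
        (Or.inl (mul_ne_zero hr0 (by linarith)))
      exact ⟨e, by linarith⟩)
    (fun b _ => conv_gt' _ (r * (b.1.2 * b.2 - 1)) _ (fun t => by ring))
  exact fib_step _ h3
    (fun x a => x.1.1.2 * x.1.2 - 1 < a * (x.2 * (x.1.1.2 * x.1.2 - 1) - x.1.1.2))
    (isOpen_lt (by fun_prop) (by fun_prop))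
    (by
      rintro ⟨⟨⟨q, c⟩, d⟩, e⟩ ⟨-, h⟩
      apply ex_gt
      simp only at h ⊢
      left; intro h0
      have : e * (c * d - 1) = c := by linarith
      rw [this] at h
      exact lt_irrefl _ h)
    (fun b _ => conv_gt _ _)

/-- The sign of a boolean. -/
def sg (b : Bool) : ℝ := if b then 1 else -1

theorem sg_cases (b : Bool) : sg b = 1 ∨ sg b = -1 := by cases b <;> simp [sg]

/-- The index type of the pieces. -/
abbrev Idx : Type := Bool × Bool × (Bool ⊕ Option Bool)

/-- The twenty pieces. -/
def piece : Idx → Set E6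
  | (s, t, Sum.inl r) => TA (sg s) (sg t) (sg r)
  | (s, t, Sum.inr none) => TC (sg s) (sg t)
  | (s, t, Sum.inr (some r)) => TB (sg s) (sg t) (sg r)

theorem piece_good : ∀ i, IsOpen (piece i) ∧ ContractibleSpace (piece i)
  | (s, t, Sum.inl r) => TA_good (sg_cases s) (sg_cases t) (sg_cases r)
  | (s, t, Sum.inr none) => TC_good (sg_cases s) (sg_cases t)
  | (s, t, Sum.inr (some r)) => TB_good (sg_cases s) (sg_cases t) (sg_cases r)

theorem sg_pos {b : Bool} {x : ℝ} (h : 0 < sg b * x) : b = decide (0 < x) := by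
  cases b
  · simp [sg] at h; simp; exact h.le
  · simp [sg] at h; simp [h]

theorem sg_decide {x : ℝ} (h : x ≠ 0) : 0 < sg (decide (0 < x)) * x := by
  rcases lt_or_gt_of_ne h with hx | hx
  · have : ¬ (0 < x) := by linarith
    simp [sg, this, hx]
  · simp [sg, hx]

/-- First sign conditions of a piece. -/
theorem piece_sign : ∀ (i : Idx) (x : E6), x ∈ piece i →
    0 < sg i.1 * x.1.1.1.1.1 ∧ 0 < sg i.2.1 * x.1.1.1.1.2
  | (_, _, Sum.inl _), _, h => h.1.1.1
  | (_, _, Sum.inr none), _, h => h.1.1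
  | (_, _, Sum.inr (some _)), _, h => h.1.1.1.1

theorem TA_disj {s t s' t' : ℝ} {r r' : Bool} {x : E6} (h : x ∈ TA s t (sg r))
    (h' : x ∈ TA s' t' (sg r')) : r = r' := by
  obtain ⟨⟨⟨⟨⟨f, p⟩, c⟩, d⟩, e⟩, a⟩ := x
  obtain ⟨⟨⟨-, h1⟩, h2⟩, h3⟩ := h
  obtain ⟨⟨⟨-, h4⟩, h5⟩, -⟩ := h'
  simp only at h1 h2 h3 h4 h5
  by_contra hne
  cases r <;> cases r' <;> simp [sg] at h1 h2 h3 h4 h5 hne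
  all_goals
    rcases h2 with h2 | h2 <;> rcases h5 with h5 | h5
    · linarith
    · rcases h1 with h1 | h1 <;> linarith [h5.1, h5.2]
    · rcases h4 with h4 | h4 <;> linarith [h2.1, h2.2]
    · linarith [h5.1, h2.1]

theorem TB_disj {s t s' t' : ℝ} {r r' : Bool} {x : E6} (h : x ∈ TB s t (sg r))
    (h' : x ∈ TB s' t' (sg r')) : r = r' := by
  obtain ⟨⟨⟨⟨⟨f, p⟩, c⟩, d⟩, e⟩, a⟩ := x
  obtain ⟨⟨⟨⟨-, h1⟩, h2⟩, h3⟩, -⟩ := h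
  obtain ⟨⟨⟨⟨-, h4⟩, h5⟩, h6⟩, -⟩ := h'
  rw [sg_pos h1, sg_pos h4]

theorem TA_TB_disj {s t s' t' r r' : ℝ} {x : E6} (h : x ∈ TA s t r)
    (h' : x ∈ TB s' t' r') : False := lt_asymm h.2 h'.2

theorem TA_TC_disj {s t s' t' r : ℝ} {x : E6} (h : x ∈ TA s t r)
    (h' : x ∈ TC s' t') : False := lt_asymm h.2 h'.2

theorem TB_TC_disj {s t s' t' : ℝ} {r : Bool} {x : E6} (h : x ∈ TB s t (sg r))
    (h' : x ∈ TC s' t') : False := by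
  obtain ⟨⟨⟨⟨⟨f, p⟩, c⟩, d⟩, e⟩, a⟩ := x
  obtain ⟨⟨⟨⟨-, h1⟩, h2⟩, h3⟩, -⟩ := h
  obtain ⟨⟨-, h4⟩, -⟩ := h'
  simp only at h1 h2 h3 h4
  cases r <;> simp [sg] at h1 h3 <;> rcases h4 with h4 | h4 | h4 <;> linarith

theorem piece_disj (i j : Idx) (x : E6) (hi : x ∈ piece i) (hj : x ∈ piece j) : i = j := by
  have h1 := piece_sign i x hi
  have h2 := piece_sign j x hj
  obtain ⟨s, t, u⟩ := i
  obtain ⟨s', t', u'⟩ := j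
  simp only at h1 h2
  have e1 : s = s' := by rw [sg_pos h1.1, sg_pos h2.1]
  have e2 : t = t' := by rw [sg_pos h1.2, sg_pos h2.2]
  subst e1 e2
  have : u = u' := by
    rcases u with r | _ | r <;> rcases u' with r' | _ | r'
    · rw [TA_disj hi hj]
    · exact (TA_TC_disj hi hj).elim
    · exact (TA_TB_disj hi hj).elim
    · exact (TA_TC_disj hj hi).elim
    · rfl
    · exact (TB_TC_disj hj hi).elim
    · exact (TA_TB_disj hj hi).elim
    · exact (TB_TC_disj hi hj).elim
    · rw [TB_disj hi hj]
  rw [this]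

theorem Z6_eq : Z6 = ⋃ i, piece i := by
  ext x
  rw [Set.mem_iUnion]
  constructor
  · rintro ⟨hf, hp, hq⟩
    obtain ⟨⟨⟨⟨⟨f, p⟩, c⟩, d⟩, e⟩, a⟩ := x
    simp only at hf hp hq
    have hF := sg_decide hf
    have hG := sg_decide hp
    suffices h : ∃ u, (((((f, p), c), d), e), a) ∈ piece (decide (0 < f), decide (0 < p), u) by
      obtain ⟨u, hu⟩ := h
      exact ⟨_, hu⟩
    rcases lt_or_gt_of_ne hq with hq | hq
    · have hq' : a * (e * (c * d - 1) - c) < c * d - 1 := by linarith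
      rcases lt_trichotomy (c * d) 1 with h | h | h
      · rcases lt_trichotomy (e * (c * d - 1)) c with h1 | h1 | h1
        · exact ⟨Sum.inl true, ⟨⟨⟨⟨hF, hG⟩, Or.inl h⟩, Or.inl (by simpa [sg] using h1)⟩, hq'⟩⟩
        · rw [h1] at hq'
          linarith
        · exact ⟨Sum.inl false, ⟨⟨⟨⟨hF, hG⟩, Or.inl h⟩, Or.inl (by simpa [sg] using h1)⟩, hq'⟩⟩
      · rcases lt_trichotomy c 0 with hc | hc | hc
        · exact ⟨Sum.inl false, ⟨⟨⟨⟨hF, hG⟩, Or.inr (by simpa [sg] using hc)⟩,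
            Or.inl (by simpa [sg, h] using hc)⟩, hq'⟩⟩
        · simp [hc] at h
        · exact ⟨Sum.inl true, ⟨⟨⟨⟨hF, hG⟩, Or.inr (by simpa [sg] using hc)⟩,
            Or.inl (by simpa [sg, h] using hc)⟩, hq'⟩⟩
      · rcases lt_trichotomy c 0 with hc | hc | hc
        · exact ⟨Sum.inl false, ⟨⟨⟨⟨hF, hG⟩, Or.inr (by simpa [sg] using hc)⟩,
            Or.inr ⟨by simpa [sg] using hc, h⟩⟩, hq'⟩⟩
        · norm_num [hc] at h
        · exact ⟨Sum.inl true, ⟨⟨⟨⟨hF, hG⟩, Or.inr (by simpa [sg] using hc)⟩,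
            Or.inr ⟨by simpa [sg] using hc, h⟩⟩, hq'⟩⟩
    · have hq' : c * d - 1 < a * (e * (c * d - 1) - c) := by linarith
      rcases lt_or_ge (c * d) 1 with h | h
      · exact ⟨Sum.inr none, ⟨⟨⟨hF, hG⟩, Or.inl h⟩, hq'⟩⟩
      rcases lt_trichotomy c 0 with hc | hc | hc
      · rcases lt_trichotomy (e * (c * d - 1)) c with h1 | h1 | h1
        · have h2 : 1 < c * d := lt_of_le_of_ne h (fun h0 => by rw [← h0] at h1; linarith)
          exact ⟨Sum.inr (some false), ⟨⟨⟨⟨⟨hF, hG⟩, by simpa [sg] using hc⟩, h2⟩,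
            by simpa [sg] using h1⟩, hq'⟩⟩
        · rw [h1] at hq'; linarith
        · exact ⟨Sum.inr none, ⟨⟨⟨hF, hG⟩, Or.inr (Or.inr ⟨hc, h1⟩)⟩, hq'⟩⟩
      · norm_num [hc] at h
      · rcases lt_trichotomy (e * (c * d - 1)) c with h1 | h1 | h1
        · exact ⟨Sum.inr none, ⟨⟨⟨hF, hG⟩, Or.inr (Or.inl ⟨hc, h1⟩)⟩, hq'⟩⟩
        · rw [h1] at hq'; linarith
        · have h2 : 1 < c * d := lt_of_le_of_ne h (fun h0 => by rw [← h0] at h1; linarith)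
          exact ⟨Sum.inr (some true), ⟨⟨⟨⟨⟨hF, hG⟩, by simpa [sg] using hc⟩, h2⟩,
            by simpa [sg] using h1⟩, hq'⟩⟩
  · rintro ⟨i, hi⟩
    have h1 := piece_sign i x hi
    refine ⟨?_, ?_, ?_⟩
    · intro h; rw [h] at h1; simp at h1
    · intro h; rw [h] at h1; simp at h1
    · obtain ⟨s, t, r | _ | r⟩ := i
      · exact (sub_neg.2 hi.2).ne
      · exact ne_of_gt (sub_pos.2 hi.2)
      · exact ne_of_gt (sub_pos.2 hi.2)

/-- `BL_η ⊂ Lo¹₄` for the longest element `η ∈ S₄` has exactly 20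
connected components, all of which are contractible. -/
theorem stmt3 :
    Nat.card (ConnectedComponents ↥(BL 4 η4)) = 20 ∧
      ∀ L : ↥(BL 4 η4), ContractibleSpace ↥(connectedComponent L) := by
  have h := components_of_pieces (fun L : BL 4 η4 => ((homeoZ L : Z6) : E6))
    (Topology.IsEmbedding.subtypeVal.comp homeoZ.isEmbedding) piece
    (fun i => (piece_good i).1) (fun i => (piece_good i).2)
    (by
      rw [← Z6_eq]
      ext x
      constructor
      · rintro ⟨L, rfl⟩
        exact (homeoZ L).2
      · intro hx
        exact ⟨homeoZ.symm ⟨x, hx⟩, by simp⟩)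
    piece_disj
  refine ⟨h.1.trans ?_, h.2⟩
  rw [Nat.card_eq_fintype_card]
  rfl
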